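/- arXiv:2602.21152 — 2 statements merged into one kernel-verified Lean document; each statement's English description precedes it below -/
import Mathlib

section
/- Let R be a commutative ring and x ∈ R. Let C₀, C₁, C₂ be cochain complexes of R-modules, let f : C₀ ⟶ C₁ and g : C₁ ⟶ C₂ be chain maps, and let h : C₀ ⟶ C₂ be a chain map that is chain homotopic to g ∘ f. Suppose there are positive integers a and b such that multiplication by x^a annihilates H^n(cone(f)) for every n and multiplication by x^b annihilates H^n(cone(g)) for every n. Then multiplication by x^{a+b} annihilates H^n(cone(h)) for every n. -/
open CategoryTheory

/-!
The octahedral axiom in the homotopy category, applied to the factorization of the class of `h`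
as `f` followed by `g`, gives a distinguished triangle `cone f ⟶ cone h ⟶ cone g ⟶ (cone f)⟦1⟧`,
so `Hⁿ(cone f) ⟶ Hⁿ(cone h) ⟶ Hⁿ(cone g)` is exact. If `s` kills the right-hand term, then `s • y`
comes from the left-hand term for every `y` in the middle; if `r` kills the left-hand term, this
gives `r • s • y = 0`.
-/

section

open Limits Pretriangulated CochainComplex HomologicalComplex

theorem annihilator_mul_annihilator_le_of_exact {R M₁ M₂ M₃ : Type*} [Semiring R]
    [AddCommMonoid M₁] [AddCommMonoid M₂] [AddCommMonoid M₃]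
    [Module R M₁] [Module R M₂] [Module R M₃]
    {i : M₁ →ₗ[R] M₂} {p : M₂ →ₗ[R] M₃} (hip : Function.Exact i p) :
    Module.annihilator R M₁ * Module.annihilator R M₃ ≤ Module.annihilator R M₂ := by
  refine Ideal.mul_le.2 fun r hr s hs ↦ Module.mem_annihilator.2 fun y ↦ ?_
  have hpy : p (s • y) = 0 := by rw [map_smul, Module.mem_annihilator.1 hs]
  obtain ⟨z, hz⟩ := (hip _).1 hpy
  rw [mul_smul, ← hz, ← map_smul, Module.mem_annihilator.1 hr, map_zero]

theorem exists_distinguished_mappingCone_of_homotopy {A : Type*} [Category* A] [Preadditive A]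
    [HasZeroObject A] [HasBinaryBiproducts A] {K L M : CochainComplex A ℤ}
    {f : K ⟶ L} {g : L ⟶ M} {h : K ⟶ M} (H : Homotopy h (f ≫ g)) :
    ∃ (α : mappingCone f ⟶ mappingCone h) (β : mappingCone h ⟶ mappingCone g) (γ : _),
      Triangle.mk ((HomotopyCategory.quotient A (.up ℤ)).map α)
        ((HomotopyCategory.quotient A (.up ℤ)).map β) γ ∈ distTriang _ := by
  let Q := HomotopyCategory.quotient A (.up ℤ)
  have comm : Q.map f ≫ Q.map g = Q.map h := by
    rw [← Q.map_comp, HomotopyCategory.eq_of_homotopy _ _ H]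
  let O := Triangulated.someOctahedron comm
    (HomotopyCategory.mappingCone_triangleh_distinguished f)
    (HomotopyCategory.mappingCone_triangleh_distinguished g)
    (HomotopyCategory.mappingCone_triangleh_distinguished h)
  obtain ⟨α : mappingCone f ⟶ mappingCone h, hα⟩ := Q.map_surjective O.m₁
  obtain ⟨β : mappingCone h ⟶ mappingCone g, hβ⟩ := Q.map_surjective O.m₃
  exact ⟨α, β, _, hα ▸ hβ ▸ O.mem⟩

theorem exact_homologyMap_of_distinguished {A : Type*} [Category* A] [Abelian A]
    {K L M : CochainComplex A ℤ} {α : K ⟶ L} {β : L ⟶ M} {γ : _ ⟶ _}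
    (hT : Triangle.mk ((HomotopyCategory.quotient A (.up ℤ)).map α)
      ((HomotopyCategory.quotient A (.up ℤ)).map β) γ ∈ distTriang _) (n : ℤ) :
    ∃ w : homologyMap α n ≫ homologyMap β n = 0, (ShortComplex.mk _ _ w).Exact := by
  let F := HomotopyCategory.homologyFunctor A (.up ℤ) n
  let e := HomotopyCategory.homologyFunctorFactors A (.up ℤ) n
  have hαβ : Homotopy (α ≫ β) 0 := HomotopyCategory.homotopyOfEq _ _ <| by
    rw [Functor.map_comp, Functor.map_zero]
    exact comp_distTriang_mor_zero₁₂ _ hT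
  have w : homologyMap α n ≫ homologyMap β n = 0 := by
    rw [← homologyMap_comp, hαβ.homologyMap_eq, homologyMap_zero]
  exact ⟨w, (ShortComplex.exact_iff_of_iso
    (ShortComplex.isoMk (e.app K) (e.app L) (e.app M) (e.hom.naturality α).symm
      (e.hom.naturality β).symm)).1 (F.map_distinguished_exact _ hT)⟩

theorem cone_of_composition_torsion_general {R : Type*} [Ring R]
    {C₀ C₁ C₂ : CochainComplex (ModuleCat R) ℤ} {f : C₀ ⟶ C₁} {g : C₁ ⟶ C₂} {h : C₀ ⟶ C₂}
    (H : Homotopy h (f ≫ g)) (n : ℤ) :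
    Module.annihilator R ((mappingCone f).homology n) *
        Module.annihilator R ((mappingCone g).homology n) ≤
      Module.annihilator R ((mappingCone h).homology n) := by
  obtain ⟨_, _, _, hT⟩ := exists_distinguished_mappingCone_of_homotopy H
  obtain ⟨_, hS⟩ := exact_homologyMap_of_distinguished hT n
  exact annihilator_mul_annihilator_le_of_exact
    ((ShortComplex.ShortExact.moduleCat_exact_iff_function_exact _).1 hS)

end

/-- If `h : C₀ ⟶ C₂` is chain homotopic to `g ∘ f`, and the homology of
`cone(f)` is annihilated by `x^a` and that of `cone(g)` by `x^b`, then the homology of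
`cone(h)` is annihilated by `x^(a+b)`. -/
theorem cone_of_composition_torsion (R : Type) [CommRing R] (x : R)
    (C₀ C₁ C₂ : CochainComplex (ModuleCat R) ℤ)
    (f : C₀ ⟶ C₁) (g : C₁ ⟶ C₂) (h : C₀ ⟶ C₂)
    (H : Homotopy h (f ≫ g)) (a b : ℕ) (ha : 0 < a) (hb : 0 < b)
    (hfa : ∀ (n : ℤ) (m : (CochainComplex.mappingCone f).homology n), x ^ a • m = 0)
    (hgb : ∀ (n : ℤ) (m : (CochainComplex.mappingCone g).homology n), x ^ b • m = 0) :
    ∀ (n : ℤ) (m : (CochainComplex.mappingCone h).homology n), x ^ (a + b) • m = 0 := fun n ↦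
  Module.mem_annihilator.1 <| pow_add x a b ▸ cone_of_composition_torsion_general H n
    (Ideal.mul_mem_mul (Module.mem_annihilator.2 (hfa n)) (Module.mem_annihilator.2 (hgb n)))
end

section
/- Let p be a prime number. For every natural number n, the group cohomology H^n(G, M) of the cyclic group G = ℤ/pℤ with coefficients in the trivial G-module M = 𝔽_p = ℤ/pℤ is a one-dimensional vector space over 𝔽_p. -/
/-!
For a generator `g` of a finite cyclic group `G`, the cohomology of a representation `A` is that of
the periodic complex `0 ⟶ A ⟶ A ⟶ A ⟶ ⋯` whose differentials alternate between `ρ(g) - 1` and the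
norm `N`. If `G` acts trivially then `ρ(g) - 1 = 0` and `N` is multiplication by the order of `G`,
so when that order annihilates `A` all differentials vanish and every cohomology group is `A`
itself.
-/

open CategoryTheory

universe u

section HomologicalComplex

variable {C ι : Type*} [Category* C] [Limits.HasZeroMorphisms C] {c : ComplexShape ι}

/-- The identification of the homology of a complex in a degree `i` with its object in that degree,
when the differentials into and out of degree `i` vanish. -/
noncomputable def homologyIsoXOfZeroDifferentials (K : HomologicalComplex C c) (i : ι)
    [K.HasHomology i] (h_to : K.d (c.prev i) i = 0) (h_from : K.d i (c.next i) = 0) :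
    K.homology i ≅ K.X i :=
  (K.isoHomologyπ _ i rfl h_to).symm ≪≫ K.iCyclesIso i _ rfl h_from

end HomologicalComplex

theorem representation_norm_apply_of_isTrivial {k G V : Type*} [Semiring k] [Group G]
    [Fintype G] [AddCommMonoid V] [Module k V] (ρ : Representation k G V) [ρ.IsTrivial] (v : V) :
    ρ.norm v = Nat.card G • v := by
  simp [Representation.norm]

theorem rep_norm_toLinearMap_eq_zero_of_isTrivial {k G : Type*} [Ring k] [Group G] [Fintype G]
    (A : Rep k G) [A.IsTrivial] (hA : ∀ v : A, Nat.card G • v = 0) :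
    A.norm.hom.toLinearMap = 0 :=
  LinearMap.ext fun v => (representation_norm_apply_of_isTrivial A.ρ v).trans (hA v)

theorem applyAsHom_sub_id_toLinearMap_eq_zero_of_isTrivial {k G : Type*} [Ring k]
    [CommMonoid G] (A : Rep k G) [A.IsTrivial] (g : G) :
    (A.applyAsHom g - 𝟙 A).hom.toLinearMap = 0 := by
  ext v
  simp [Rep.sub_hom]

section FiniteCyclic

variable {k G : Type u} [CommRing k] [CommGroup G] (A : Rep.{u} k G) [A.IsTrivial]

theorem moduleCatCochainComplex_d_eq_zero_of_isTrivial [Fintype G]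
    (hA : ∀ v : A, Nat.card G • v = 0) (g : G) (i j : ℕ) :
    (Rep.FiniteCyclicGroup.moduleCatCochainComplex A g).d i j = 0 := by
  rw [HomologicalComplex.alternatingConst_d]
  split_ifs
  · exact congrArg ModuleCat.ofHom (applyAsHom_sub_id_toLinearMap_eq_zero_of_isTrivial A g)
  · exact congrArg ModuleCat.ofHom (rep_norm_toLinearMap_eq_zero_of_isTrivial A hA)
  · rfl

/-- The identification of every cohomology group of a finite cyclic group `G` with its coefficient
module, for a trivial representation annihilated by the order of `G`. It depends on a choice of
generator of `G`. -/
noncomputable def groupCohomologyIsoOfIsTrivial [Finite G] [IsCyclic G]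
    (hA : ∀ v : A, Nat.card G • v = 0) (n : ℕ) : groupCohomology A n ≅ ModuleCat.of k A :=
  letI := Fintype.ofFinite G
  let g : G := (IsCyclic.exists_generator (α := G)).choose
  have hg : ∀ x, x ∈ Subgroup.zpowers g := (IsCyclic.exists_generator (α := G)).choose_spec
  have hd := moduleCatCochainComplex_d_eq_zero_of_isTrivial A hA g
  groupCohomologyIso A n (Rep.FiniteCyclicGroup.resolution k g hg) ≪≫
    HomologicalComplex.homologyMapIso (Rep.FiniteCyclicGroup.homResolutionIso A g hg) n ≪≫
    homologyIsoXOfZeroDifferentials _ n (hd _ _) (hd _ _)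

theorem groupCohomology_zmod_p_trivial_finrank_general [Finite G] [IsCyclic G]
    (hA : ∀ v : A, Nat.card G • v = 0) (n : ℕ) :
    Module.finrank k (groupCohomology A n) = Module.finrank k A :=
  (groupCohomologyIsoOfIsTrivial A hA n).toLinearEquiv.finrank_eq

end FiniteCyclic

/-- For a prime `p`, the group cohomology `H^n(ℤ/pℤ, 𝔽_p)` of the cyclic
group of order `p` with coefficients in the trivial module `𝔽_p` is one-dimensional over
`𝔽_p` for every `n`. -/
theorem groupCohomology_zmod_p_trivial_finrank (p : ℕ) (hp : p.Prime) (n : ℕ) :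
    Module.finrank (ZMod p)
      (groupCohomology (Rep.trivial (ZMod p) (Multiplicative (ZMod p)) (ZMod p)) n) = 1 := by
  have : Fact p.Prime := ⟨hp⟩
  exact (groupCohomology_zmod_p_trivial_finrank_general _ (by simp) n).trans (Module.finrank_self _)
end
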